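/- Let h be even and let w be a divisor of q+1. Let L̄ ≤ M_ℓ be a subgroup such that |L̄ ∩ Z| = w and L̄ is the internal direct product of L̄ ∩ Z and a subgroup S isomorphic to the alternating group A₄. Then the number N of orbits of L̄ acting on O equals (q+20)/12 + (q/4)·((q−1)/3)·((q+1)/w). -/

import Mathlib

/-!
Count orbits with Burnside's lemma. The order `12` of `S` is coprime to `q + 1`, so the determinant
`τ` of an element of `S` is `1` and `S` lies in `SU(1,1)`. If `s * z`, with `s ∈ S` and `z` central,
fixes one of the `q ^ 3 - q` affine points of the curve, so does `(s * z) ^ 12 = z ^ 12`, whence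
`z = 1`; then `s ∈ SU(1,1)` fixes a vector of norm one, so `s = 1`. Thus `L` acts freely there.

The centre fixes all `q + 1` points at infinity. For `s = [a, c, 1]` with `c ≠ 0`, a fixed point at
infinity is an eigenline of `s`, and `(u : 1 : 0) ↦ c * u + a ^ q` matches those on the curve with
the eigenvalues of `s` in `𝔽_q`. An involution has the single eigenvalue `1` in characteristic two;
an element of order three has the two primitive cube roots of unity, which lie in `𝔽_q` as
`q ≡ 1 [MOD 3]`. Since `A₄` has `3` involutions and `8` elements of order three,
`12 * w * N = w * (q + 1 + 3 + 16) + (q ^ 3 - q)`.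
-/

open Matrix

noncomputable def glAct {F : Type*} [Field F] (M : GL (Fin 3) F)
    (x : Projectivization F (Fin 3 → F)) : Projectivization F (Fin 3 → F) :=
  Projectivization.map
    ((LinearMap.GeneralLinearGroup.generalLinearEquiv F (Fin 3 → F)
        (Matrix.GeneralLinearGroup.toLin M)).toLinearMap)
    ((LinearMap.GeneralLinearGroup.generalLinearEquiv F (Fin 3 → F)
        (Matrix.GeneralLinearGroup.toLin M)).injective) x

noncomputable def numOrbits {F : Type*} [Field F] (L : Subgroup (GL (Fin 3) F))
    (O : Set (Projectivization F (Fin 3 → F))) : ℕ :=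
  Nat.card ((fun x => {y | ∃ g ∈ L, glAct g x = y}) '' O :
    Set (Set (Projectivization F (Fin 3 → F))))

def hermitianPts (q : ℕ) (F : Type*) [Field F] : Set (Projectivization F (Fin 3 → F)) :=
  {x | x.rep 1 ^ (q + 1) = x.rep 0 ^ (q + 1) - x.rep 2 ^ (q + 1)}

def MlSet (q : ℕ) (F : Type*) [Field F] : Set (GL (Fin 3) F) :=
  {M | ∃ a c τ : F, a ^ (q + 1) - c ^ (q + 1) = 1 ∧ τ ^ (q + 1) = 1 ∧
    (M : Matrix (Fin 3) (Fin 3) F) = !![a, τ * c ^ q, 0; c, τ * a ^ q, 0; 0, 0, 1]}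

def ZSet (q : ℕ) (F : Type*) [Field F] : Set (GL (Fin 3) F) :=
  {M | ∃ ε : F, ε ^ (q + 1) = 1 ∧ (M : Matrix (Fin 3) (Fin 3) F) = Matrix.diagonal ![ε, ε, 1]}

section GroupTheory

open MulAction Finset

theorem sum_ncard_fixed_eq_card_orbits_mul_card {G X : Type*} [Group G] [Fintype G]
    [MulAction G X] {s : Set X} [Finite s] (hs : ∀ g : G, ∀ x ∈ s, g • x ∈ s) :
    ∑ g : G, {x | x ∈ s ∧ g • x = x}.ncard = Nat.card (orbit G '' s) * Nat.card G := by
  classical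
  obtain ⟨O, rfl⟩ : ∃ O : SubMulAction G X, (O : Set X) = s := ⟨⟨s, fun g _ => hs g _⟩, rfl⟩
  have : Finite O := ‹_›
  have : Fintype O := Fintype.ofFinite O
  have hfix (g : G) : {x | x ∈ (O : Set X) ∧ g • x = x}.ncard = Fintype.card (fixedBy O g) := by
    rw [← Nat.card_eq_fintype_card, Nat.card_coe_set_eq,
      ← Set.ncard_image_of_injective _ Subtype.val_injective]
    congr 1
    ext x
    simp [Subtype.ext_iff, and_comm]
  have horb : Nat.card (orbit G '' (O : Set X)) = Nat.card (Quotient (orbitRel G O)) := by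
    rw [Set.image_eq_range]
    refine (Nat.card_congr ((Quotient.congrRight fun x y => ?_).trans
      (Setoid.quotientKerEquivRange _))).symm
    rw [SubMulAction.orbitRel_of_subMul, Setoid.comap_rel, orbitRel_apply, Setoid.ker_def,
      orbit_eq_iff]
  simp only [hfix, horb, Nat.card_eq_fintype_card, sum_card_fixedBy_eq_card_orbits_mul_card_group]

/-- The internal direct product of two commuting subgroups with trivial intersection, as the product
of the subgroups. -/
noncomputable def prodMulEquivSup {G : Type*} [Group G] {H K : Subgroup G} (hdisj : Disjoint H K)
    (hcomm : ∀ (h : H) (k : K), Commute (h : G) k) : H × K ≃* ↥(H ⊔ K) :=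
  (MonoidHom.ofInjective ((MonoidHom.noncommCoprod_injective H.subtype K.subtype hcomm).2
    ⟨H.subtype_injective, K.subtype_injective, by simpa using hdisj⟩)).trans
  (MulEquiv.subgroupCongr ((MonoidHom.noncommCoprod_range H.subtype K.subtype hcomm).trans
    (by rw [H.range_subtype, K.range_subtype])))

lemma coe_prodMulEquivSup {G : Type*} [Group G] {H K : Subgroup G} (hdisj : Disjoint H K)
    (hcomm : ∀ (h : H) (k : K), Commute (h : G) k) (x : H × K) :
    (prodMulEquivSup hdisj hcomm x : G) = x.1 * x.2 :=
  rfl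

lemma range_powMonoidHom_eq_ker {G : Type*} [CommGroup G] [IsCyclic G] [Finite G] {m n : ℕ}
    (h : Nat.card G = m * n) :
    (powMonoidHom m : G →* G).range = (powMonoidHom n : G →* G).ker := by
  have hm : 0 < m := Nat.pos_of_mul_pos_right (h ▸ Nat.card_pos)
  apply Subgroup.eq_of_le_of_card_ge
  · rintro _ ⟨g, rfl⟩
    simp [MonoidHom.mem_ker, ← pow_mul, ← h]
  · rw [IsCyclic.card_powMonoidHom_ker, IsCyclic.card_powMonoidHom_range, h, Nat.gcd_mul_left_left,
      Nat.gcd_mul_right_left, Nat.mul_div_cancel_left _ hm]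

lemma pow_two_or_three_eq_one_of_alternatingGroup_four {G : Type*} [Group G]
    (e : G ≃* alternatingGroup (Fin 4)) (g : G) : g ^ 2 = 1 ∨ g ^ 3 = 1 := by
  have key : ∀ g : alternatingGroup (Fin 4), g ^ 2 = 1 ∨ g ^ 3 = 1 := by decide
  simpa only [← map_pow, map_eq_one_iff e e.injective] using key (e g)

lemma sum_of_mulEquiv_alternatingGroup_four {G M : Type*} [Group G] [Fintype G] [AddCommMonoid M]
    (e : G ≃* alternatingGroup (Fin 4)) {f : G → M} {m n : M}
    (h2 : ∀ g ≠ 1, g ^ 2 = 1 → f g = m) (h3 : ∀ g ≠ 1, g ^ 3 = 1 → f g = n) :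
    ∑ g, f g = f 1 + 3 • m + 8 • n := by
  classical
  have hf (g : G) : f g = if e g = 1 then f 1 else if e g ^ 2 = 1 then m else n := by
    simp only [← map_pow, map_eq_one_iff e e.injective]
    split_ifs with hg hg2
    · rw [hg]
    · exact h2 g hg hg2
    · exact h3 g hg ((pow_two_or_three_eq_one_of_alternatingGroup_four e g).resolve_left hg2)
  have hcard1 : #{g : alternatingGroup (Fin 4) | g = 1} = 1 := by decide
  have hcard2 : #{g : alternatingGroup (Fin 4) | ¬ g = 1 ∧ g ^ 2 = 1} = 3 := by decide
  have hcard3 : #{g : alternatingGroup (Fin 4) | ¬ g = 1 ∧ ¬ g ^ 2 = 1} = 8 := by decide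
  rw [Fintype.sum_equiv e.toEquiv f
    (fun g => if g = 1 then f 1 else if g ^ 2 = 1 then m else n) hf]
  simp only [sum_ite, sum_const, filter_filter, hcard1, hcard2, hcard3, one_nsmul, add_assoc]

end GroupTheory

section FiniteField

open Finset

variable {F : Type*} [Field F] [Fintype F] {q : ℕ}

lemma exists_expChar_pow_eq (hF : Fintype.card F = q ^ 2) : ∃ p k, ExpChar F p ∧ q = p ^ k := by
  obtain ⟨p, _, n, hp, hcard⟩ := FiniteField.card' F
  obtain ⟨k, -, hk⟩ := (Nat.dvd_prime_pow hp).1 (hcard ▸ hF ▸ dvd_pow_self q two_ne_zero)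
  exact ⟨p, k, .prime hp, hk⟩

lemma pow_pow_of_card_eq_sq (hF : Fintype.card F = q ^ 2) (x : F) : (x ^ q) ^ q = x := by
  rw [← pow_mul, ← sq, ← hF, FiniteField.pow_card]

lemma add_pow_of_card_eq_sq (hF : Fintype.card F = q ^ 2) (x y : F) :
    (x + y) ^ q = x ^ q + y ^ q := by
  obtain ⟨p, k, _, rfl⟩ := exists_expChar_pow_eq hF
  exact add_pow_expChar_pow x y p k

lemma sub_pow_of_card_eq_sq (hF : Fintype.card F = q ^ 2) (x y : F) :
    (x - y) ^ q = x ^ q - y ^ q := by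
  obtain ⟨p, k, _, rfl⟩ := exists_expChar_pow_eq hF
  exact sub_pow_expChar_pow x y k

lemma one_lt_of_card_eq_sq (hF : Fintype.card F = q ^ 2) : 1 < q :=
  (Nat.one_lt_pow_iff two_ne_zero).1 (hF ▸ Fintype.one_lt_card)

lemma card_units_of_card_eq_sq (hF : Fintype.card F = q ^ 2) :
    Nat.card Fˣ = (q + 1) * (q - 1) := by
  rw [Nat.card_units, Nat.card_eq_fintype_card, hF, ← Nat.sq_sub_sq, one_pow]

lemma ncard_pow_eq (hF : Fintype.card F = q ^ 2) {t : F} (ht : t ≠ 0) (htq : t ^ q = t) :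
    {x : F | x ^ (q + 1) = t}.ncard = q + 1 := by
  have hq := one_lt_of_card_eq_sq hF
  have hmem : Units.mk0 t ht ∈ (powMonoidHom (q - 1) : Fˣ →* Fˣ).ker := by
    rw [MonoidHom.mem_ker, powMonoidHom_apply, ← mul_eq_left (a := Units.mk0 t ht),
      mul_pow_sub_one (by lia)]
    exact Units.ext htq
  rw [← range_powMonoidHom_eq_ker (card_units_of_card_eq_sq hF)] at hmem
  obtain ⟨u, hu⟩ := hmem
  have himage : {x : F | x ^ (q + 1) = t} =
      Units.val '' (powMonoidHom (q + 1) ⁻¹' {powMonoidHom (q + 1) u} : Set Fˣ) := by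
    ext x
    rw [hu]
    constructor
    · rintro rfl
      have hx : x ≠ 0 := by rintro rfl; simp at ht
      exact ⟨Units.mk0 x hx, by ext; simp, rfl⟩
    · rintro ⟨y, hy, rfl⟩
      simpa using congrArg Units.val hy
  rw [himage, Set.ncard_image_of_injective _ Units.val_injective, ← Nat.card_coe_set_eq,
    Nat.card_congr (MonoidHom.fiberEquivKer _ u), IsCyclic.card_powMonoidHom_ker,
    card_units_of_card_eq_sq hF, Nat.gcd_mul_right_left]

lemma ncard_sq_add_self_add_one_eq_zero (hF : Fintype.card F = q ^ 2) (hq3 : q % 3 = 1) :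
    {x : F | x ^ q = x ∧ x ^ 2 + x + 1 = 0}.ncard = 2 := by
  have hdvd : 3 ∣ Nat.card Fˣ := by
    rw [card_units_of_card_eq_sq hF]
    exact (show 3 ∣ q - 1 by lia).mul_left _
  obtain ⟨u, hu⟩ := exists_prime_orderOf_dvd_card' 3 hdvd
  have hζ : IsPrimitiveRoot (u : F) 3 := IsPrimitiveRoot.coe_units_iff.2 (hu ▸ .orderOf u)
  have := hζ.neZero'
  have hset : {x : F | x ^ q = x ∧ x ^ 2 + x + 1 = 0} = primitiveRoots 3 F := by
    ext x
    have hroot : x ^ 2 + x + 1 = 0 ↔ IsPrimitiveRoot x 3 := by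
      rw [← Polynomial.isRoot_cyclotomic_iff, Polynomial.IsRoot.def, Polynomial.cyclotomic_three]
      simp
    rw [Set.mem_ofPred_eq, hroot, mem_coe, mem_primitiveRoots three_pos, and_iff_right_iff_imp]
    intro hx
    rw [pow_eq_pow_mod q hx.pow_eq_one, hq3, pow_one]
  rw [hset, Set.ncard_coe_finset, hζ.card_primitiveRoots, Nat.totient_prime Nat.prime_three]

/-- The vectors of norm one for the Hermitian form `x ^ (q + 1) - y ^ (q + 1)` on `F²`. -/
def unitVectors (q : ℕ) (F : Type*) [Field F] : Set (F × F) :=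
  {p | p.1 ^ (q + 1) - p.2 ^ (q + 1) = 1}

lemma ncard_unitVectors (hF : Fintype.card F = q ^ 2) :
    (unitVectors q F).ncard = q ^ 3 - q := by
  classical
  have hfibre (x : F) : {y : F | y ^ (q + 1) = x ^ (q + 1) - 1}.ncard =
      if x ^ (q + 1) = 1 then 1 else q + 1 := by
    split_ifs with hx
    · rw [hx, sub_self, Set.ncard_eq_one]
      exact ⟨0, by ext; simp⟩
    · refine ncard_pow_eq hF (sub_ne_zero.2 hx) ?_
      rw [sub_pow_of_card_eq_sq hF, one_pow, pow_succ, mul_pow, pow_pow_of_card_eq_sq hF, mul_comm]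
  have hcard : #{x : F | x ^ (q + 1) = 1} = q + 1 := by
    rw [← Set.ncard_coe_finset, coe_filter_univ, ncard_pow_eq hF one_ne_zero (one_pow q)]
  have hcompl : q + 1 + #{x : F | ¬ x ^ (q + 1) = 1} = q ^ 2 := by
    simpa only [hcard, card_univ, hF] using
      card_filter_add_card_filter_not (s := univ) fun x : F => x ^ (q + 1) = 1
  have e : unitVectors q F ≃ Σ x : F, {y : F | y ^ (q + 1) = x ^ (q + 1) - 1} :=
    (Equiv.subtypeProdEquivSigmaSubtype fun x y => x ^ (q + 1) - y ^ (q + 1) = 1).trans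
      (Equiv.sigmaCongrRight fun x => Equiv.subtypeEquivRight fun y => by
        rw [Set.mem_ofPred_eq, sub_eq_iff_eq_add, eq_sub_iff_add_eq, add_comm (1 : F), eq_comm])
  rw [← Nat.card_coe_set_eq, Nat.card_congr e, Nat.card_sigma]
  simp only [Nat.card_coe_set_eq, hfibre, sum_ite, sum_const, hcard, smul_eq_mul]
  refine Nat.eq_sub_of_add_eq ?_
  linear_combination (q + 1) * hcompl

lemma coprime_twelve_add_one_of_card_eq_sq [CharP F 2] (hF : Fintype.card F = q ^ 2)
    (hq3 : q % 3 = 1) : Nat.Coprime 12 (q + 1) := by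
  have hcard : Fintype.card F % 2 = 0 := FiniteField.even_card_of_char_two (ringChar.eq F 2)
  have heven : Even q := (Nat.even_pow.1 (hF ▸ Nat.even_iff.2 hcard)).1
  have h2 : Nat.Coprime 2 (q + 1) := Nat.coprime_two_left.2 heven.add_one
  have h3 : Nat.Coprime 3 (q + 1) := (Nat.Prime.coprime_iff_not_dvd Nat.prime_three).2 (by lia)
  exact (h2.mul_left h2).mul_left h3

end FiniteField

section HermitianCurve

variable {F : Type*} [Field F] {q : ℕ}

lemma glAct_eq_smul (g : GL (Fin 3) F) (x : Projectivization F (Fin 3 → F)) :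
    glAct g x = g • x :=
  rfl

lemma numOrbits_eq_card_image_orbit (L : Subgroup (GL (Fin 3) F))
    (O : Set (Projectivization F (Fin 3 → F))) :
    numOrbits L O = Nat.card (MulAction.orbit L '' O) := by
  have horb (x) : {y | ∃ g ∈ L, glAct g x = y} = MulAction.orbit L x := by
    ext y
    simp only [glAct_eq_smul, Set.mem_ofPred_eq, MulAction.mem_orbit_iff, Subtype.exists,
      Subgroup.mk_smul, exists_prop]
  simp only [numOrbits, horb]

/-- The point `(u : 1 : 0)` of the line at infinity `Z = 0`. -/
def infPt (u : F) : Projectivization F (Fin 3 → F) :=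
  .mk F ![u, 1, 0] fun h => by simpa using congrFun h 1

/-- The affine point `(x : y : 1)`. -/
def affPt (p : F × F) : Projectivization F (Fin 3 → F) :=
  .mk F ![p.1, p.2, 1] fun h => by simpa using congrFun h 2

lemma infPt_injective : Function.Injective (infPt (F := F)) := by
  intro u v h
  obtain ⟨a, ha⟩ := (Projectivization.mk_eq_mk_iff' ..).1 h
  have h0 : a * v = u := congrFun ha 0
  have h1 : a * 1 = 1 := congrFun ha 1
  rw [← h0, ← mul_one a, h1, one_mul]

lemma affPt_injective : Function.Injective (affPt (F := F)) := by
  intro p r h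
  obtain ⟨a, ha⟩ := (Projectivization.mk_eq_mk_iff' ..).1 h
  have h0 : a * r.1 = p.1 := congrFun ha 0
  have h1 : a * r.2 = p.2 := congrFun ha 1
  have h2 : a * 1 = 1 := congrFun ha 2
  rw [mul_one] at h2
  rw [h2, one_mul] at h0 h1
  exact Prod.ext h0.symm h1.symm

lemma infPt_ne_affPt (u : F) (p : F × F) : infPt u ≠ affPt p := by
  intro h
  obtain ⟨a, ha⟩ := (Projectivization.mk_eq_mk_iff' ..).1 h.symm
  simpa using congrFun ha 2

lemma mk_mem_hermitianPts {v : Fin 3 → F} (hv : v ≠ 0) :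
    Projectivization.mk F v hv ∈ hermitianPts q F ↔
      v 1 ^ (q + 1) = v 0 ^ (q + 1) - v 2 ^ (q + 1) := by
  obtain ⟨a, ha⟩ := Projectivization.exists_smul_eq_mk_rep F v hv
  have ha0 : (a : F) ^ (q + 1) ≠ 0 := pow_ne_zero _ a.ne_zero
  simp only [hermitianPts, Set.mem_ofPred_eq, ← ha, Pi.smul_apply, Units.smul_def, smul_eq_mul,
    mul_pow]
  rw [← mul_sub, mul_right_inj' ha0]

lemma infPt_mem_hermitianPts {u : F} : infPt u ∈ hermitianPts q F ↔ u ^ (q + 1) = 1 := by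
  simp [infPt, mk_mem_hermitianPts, eq_comm]

lemma affPt_mem_hermitianPts {p : F × F} : affPt p ∈ hermitianPts q F ↔ p ∈ unitVectors q F := by
  simp [affPt, mk_mem_hermitianPts, unitVectors, eq_sub_iff_add_eq, eq_comm, add_comm]

lemma exists_eq_infPt_or_affPt {x : Projectivization F (Fin 3 → F)} (hx : x ∈ hermitianPts q F) :
    (∃ u, x = infPt u) ∨ ∃ p, x = affPt p := by
  induction x using Projectivization.ind with
  | h v hv =>
    rw [mk_mem_hermitianPts] at hx
    by_cases hv2 : v 2 = 0
    · have hv1 : v 1 ≠ 0 := by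
        intro hv1
        have hv0 : v 0 = 0 := by simpa [hv1, hv2, eq_comm (a := (0 : F))] using hx
        exact hv (by ext i; fin_cases i <;> assumption)
      refine .inl ⟨v 0 / v 1, (Projectivization.mk_eq_mk_iff' ..).2 ⟨v 1, ?_⟩⟩
      ext i; fin_cases i <;> simp [hv1, hv2, mul_div_cancel₀]
    · refine .inr ⟨(v 0 / v 2, v 1 / v 2), (Projectivization.mk_eq_mk_iff' ..).2 ⟨v 2, ?_⟩⟩
      ext i; fin_cases i <;> simp [hv2, mul_div_cancel₀]

lemma ncard_hermitianPts_and [Finite F] (P : Projectivization F (Fin 3 → F) → Prop) :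
    {x | x ∈ hermitianPts q F ∧ P x}.ncard =
      {u : F | u ^ (q + 1) = 1 ∧ P (infPt u)}.ncard +
        {p | p ∈ unitVectors q F ∧ P (affPt p)}.ncard := by
  rw [← Set.ncard_image_of_injective {u : F | _} infPt_injective,
    ← Set.ncard_image_of_injective {p : F × F | _} affPt_injective, ← Set.ncard_union_eq]
  · congr 1
    ext x
    constructor
    · rintro ⟨hx, hP⟩
      obtain ⟨u, rfl⟩ | ⟨p, rfl⟩ := exists_eq_infPt_or_affPt hx
      · exact .inl ⟨u, ⟨infPt_mem_hermitianPts.1 hx, hP⟩, rfl⟩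
      · exact .inr ⟨p, ⟨affPt_mem_hermitianPts.1 hx, hP⟩, rfl⟩
    · rintro (⟨u, ⟨hu, hP⟩, rfl⟩ | ⟨p, ⟨hp, hP⟩, rfl⟩)
      · exact ⟨infPt_mem_hermitianPts.2 hu, hP⟩
      · exact ⟨affPt_mem_hermitianPts.2 hp, hP⟩
  · rw [Set.disjoint_left]
    rintro _ ⟨u, -, rfl⟩ ⟨p, -, h⟩
    exact infPt_ne_affPt u p h.symm

section Blocks

variable {g : GL (Fin 3) F} {α β γ δ : F}

lemma smul_affPt (hg : (g : Matrix (Fin 3) (Fin 3) F) = !![α, β, 0; γ, δ, 0; 0, 0, 1])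
    (p : F × F) : g • affPt p = affPt (α * p.1 + β * p.2, γ * p.1 + δ * p.2) := by
  simp only [affPt, Projectivization.smul_mk]
  congr 1
  ext i
  fin_cases i <;> simp [Units.smul_def, hg, Matrix.smul_eq_mulVec, mulVec]

lemma smul_infPt_eq_self_iff
    (hg : (g : Matrix (Fin 3) (Fin 3) F) = !![α, β, 0; γ, δ, 0; 0, 0, 1]) (u : F) :
    g • infPt u = infPt u ↔ α * u + β = (γ * u + δ) * u := by
  have hvec : g • ![u, 1, 0] = ![α * u + β, γ * u + δ, 0] := by
    ext i
    fin_cases i <;> simp [Units.smul_def, hg, Matrix.smul_eq_mulVec, mulVec]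
  simp only [infPt, Projectivization.smul_mk, hvec, Projectivization.mk_eq_mk_iff']
  constructor
  · rintro ⟨a, ha⟩
    have h0 : a * u = α * u + β := congrFun ha 0
    have h1 : a * 1 = γ * u + δ := congrFun ha 1
    rw [← h0, ← h1, mul_one]
  · intro h
    exact ⟨γ * u + δ, by simp [h]⟩

end Blocks

lemma diagonal_eq_block (ε : F) : diagonal ![ε, ε, 1] = !![ε, 0, 0; 0, ε, 0; 0, 0, 1] := by
  ext i j
  fin_cases i <;> fin_cases j <;> rfl

/-- The central subgroup of `M_ℓ`, with underlying set `ZSet q F`. -/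
def centralSubgroup (q : ℕ) (F : Type*) [Field F] : Subgroup (GL (Fin 3) F) where
  carrier := ZSet q F
  one_mem' := ⟨1, one_pow _, by simp [diagonal_eq_block, one_fin_three]⟩
  mul_mem' := by
    rintro y z ⟨ε, hε, hy⟩ ⟨η, hη, hz⟩
    refine ⟨ε * η, by rw [mul_pow, hε, hη, one_mul], ?_⟩
    simp [Units.val_mul, hy, hz, diagonal_eq_block]
  inv_mem' := by
    rintro z ⟨ε, hε, hz⟩
    have hε0 : ε ≠ 0 := by rintro rfl; simp at hε
    refine ⟨ε⁻¹, by rw [inv_pow, hε, inv_one], Units.inv_eq_of_mul_eq_one_right ?_⟩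
    simp [hz, diagonal_eq_block, hε0, one_fin_three]

lemma commute_of_mem_MlSet_of_mem_ZSet {g z : GL (Fin 3) F} (hg : g ∈ MlSet q F)
    (hz : z ∈ ZSet q F) : Commute g z := by
  obtain ⟨a, c, τ, -, -, hg⟩ := hg
  obtain ⟨ε, -, hz⟩ := hz
  apply Units.ext
  simp [hg, hz, diagonal_eq_block, mul_comm]

lemma smul_infPt_of_mem_ZSet {z : GL (Fin 3) F} (hz : z ∈ ZSet q F) (u : F) :
    z • infPt u = infPt u := by
  obtain ⟨ε, -, hz⟩ := hz
  rw [smul_infPt_eq_self_iff (hz.trans (diagonal_eq_block ε))]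
  ring

lemma smul_mem_hermitianPts [Fintype F] (hF : Fintype.card F = q ^ 2) {g : GL (Fin 3) F}
    (hg : g ∈ MlSet q F) {x : Projectivization F (Fin 3 → F)} (hx : x ∈ hermitianPts q F) :
    g • x ∈ hermitianPts q F := by
  obtain ⟨a, c, τ, hac, hτ, hg⟩ := hg
  induction x using Projectivization.ind with
  | h v hv =>
    rw [mk_mem_hermitianPts] at hx
    simp only [Projectivization.smul_mk, mk_mem_hermitianPts, Units.smul_def, hg, smul_eq_mulVec,
      mulVec, vec3_dotProduct, of_apply, cons_val, zero_mul, add_zero, zero_add, one_mul]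
    simp only [pow_succ _ q] at hx hac hτ ⊢
    simp only [add_pow_of_card_eq_sq hF, mul_pow, pow_pow_of_card_eq_sq hF]
    linear_combination τ ^ q * τ * (a ^ q * a - c ^ q * c) * hx
      + (τ ^ q * τ * (v 0 ^ q * v 0 - v 2 ^ q * v 2) - v 0 ^ q * v 0) * hac
      + (v 0 ^ q * v 0 - v 2 ^ q * v 2) * hτ

/-- The element `[a, c, 1]` of `M_ℓ`; those with `a ^ (q + 1) - c ^ (q + 1) = 1` form `SU(1,1)`. -/
def suMatrix (q : ℕ) (a c : F) : Matrix (Fin 3) (Fin 3) F :=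
  !![a, c ^ q, 0; c, a ^ q, 0; 0, 0, 1]

lemma suMatrix_one_zero (hq : q ≠ 0) : suMatrix q (1 : F) 0 = 1 := by
  simp [suMatrix, hq, one_fin_three]

lemma exists_eq_suMatrix_of_pow_eq_one {s : GL (Fin 3) F} {n : ℕ} (hs : s ∈ MlSet q F)
    (hn : n.Coprime (q + 1)) (hsn : s ^ n = 1) :
    ∃ a c : F, a ^ (q + 1) - c ^ (q + 1) = 1 ∧ (s : Matrix (Fin 3) (Fin 3) F) = suMatrix q a c := by
  obtain ⟨a, c, τ, hac, hτ, hs⟩ := hs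
  have hdet : (s : Matrix (Fin 3) (Fin 3) F).det = τ := by
    rw [hs, det_fin_three]
    simp only [of_apply, cons_val]
    linear_combination τ * hac
  have hτn : τ ^ n = 1 := by
    rw [← hdet, ← det_pow, ← Units.val_pow_eq_pow_val, hsn, Units.val_one, det_one]
  obtain rfl : τ = 1 := (pow_eq_one_iff_of_coprime hn).1 ⟨hτn, hτ⟩
  exact ⟨a, c, hac, by rw [hs, one_mul, one_mul, suMatrix]⟩

section SpecialUnitary

variable {s : GL (Fin 3) F} {a c : F} (hs : (s : Matrix (Fin 3) (Fin 3) F) = suMatrix q a c)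
  (hac : a ^ (q + 1) - c ^ (q + 1) = 1)

include hs hac

lemma ne_zero_of_eq_suMatrix {n : ℕ} (hq : q ≠ 0) (hn : n.Coprime (q + 1)) (hsn : s ^ n = 1)
    (hs1 : s ≠ 1) : c ≠ 0 := by
  rintro rfl
  have hdiag : (s : Matrix (Fin 3) (Fin 3) F) = diagonal ![a, a ^ q, 1] := by
    rw [hs, suMatrix, zero_pow hq]
    ext i j
    fin_cases i <;> fin_cases j <;> rfl
  have han : a ^ n = 1 := by
    have h := congrArg (fun g : GL (Fin 3) F => (g : Matrix (Fin 3) (Fin 3) F) 0 0) hsn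
    simpa [hdiag, diagonal_pow] using h
  have haq : a ^ (q + 1) = 1 := by simpa using hac
  obtain rfl : a = 1 := (pow_eq_one_iff_of_coprime hn).1 ⟨han, haq⟩
  exact hs1 (Units.ext (hs.trans (suMatrix_one_zero hq)))

variable [Fintype F] (hF : Fintype.card F = q ^ 2)

include hF

lemma eq_one_of_smul_affPt_eq_self {p : F × F} (hp : p ∈ unitVectors q F)
    (h : s • affPt p = affPt p) : s = 1 := by
  have hq : q ≠ 0 := (one_lt_of_card_eq_sq hF).ne_bot
  rw [smul_affPt hs, affPt_injective.eq_iff, Prod.ext_iff] at h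
  obtain ⟨h1, h2⟩ := h
  have h3 := congrArg (· ^ q) h2
  simp only [add_pow_of_card_eq_sq hF, mul_pow, pow_pow_of_card_eq_sq hF] at h3
  -- Pair `s v = v` with `v` under the Hermitian form.
  obtain rfl : a = 1 := by
    have hp : p.1 ^ (q + 1) - p.2 ^ (q + 1) = 1 := hp
    linear_combination p.1 ^ q * h1 - p.2 * h3 + (1 - a) * hp
  obtain rfl : c = 0 := by simpa using hac
  exact Units.ext (hs.trans (suMatrix_one_zero hq))

lemma ncard_infPt_fixed_eq_ncard_eigenvalues (hc : c ≠ 0) :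
    {u : F | u ^ (q + 1) = 1 ∧ s • infPt u = infPt u}.ncard =
      {μ : F | μ ^ q = μ ∧ μ ^ 2 + 1 = (a + a ^ q) * μ}.ncard := by
  -- `c * u + a ^ q` is the eigenvalue of the eigenvector `(u, 1)`.
  have hinj : Function.Injective fun u => c * u + a ^ q :=
    (add_left_injective _).comp (mul_right_injective₀ hc)
  rw [← Set.ncard_image_of_injective _ hinj]
  congr 1
  ext μ
  simp only [Set.mem_image, Set.mem_ofPred_eq, smul_infPt_eq_self_iff hs]
  constructor
  · rintro ⟨u, ⟨hu, hfix⟩, rfl⟩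
    have hu0 : u ≠ 0 := by rintro rfl; simp at hu
    refine ⟨mul_right_cancel₀ hu0 ?_, by linear_combination -c * hfix - hac⟩
    simp only [add_pow_of_card_eq_sq hF, mul_pow, pow_pow_of_card_eq_sq hF]
    linear_combination c ^ q * hu + hfix
  · rintro ⟨hμ, heig⟩
    have hnorm : (μ - a ^ q) ^ (q + 1) = c ^ (q + 1) := by
      rw [pow_succ, sub_pow_of_card_eq_sq hF, pow_pow_of_card_eq_sq hF, hμ]
      linear_combination heig + hac
    refine ⟨(μ - a ^ q) / c, ⟨?_, ?_⟩, ?_⟩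
    · rw [div_pow, hnorm, div_self (pow_ne_zero _ hc)]
    · field_simp
      linear_combination -heig - hac
    · field_simp
      ring

lemma ncard_infPt_fixed_of_sq_eq_one [CharP F 2] (hc : c ≠ 0) (hs2 : s ^ 2 = 1) :
    {u : F | u ^ (q + 1) = 1 ∧ s • infPt u = infPt u}.ncard = 1 := by
  have htrace : a + a ^ q = 0 := by
    have h : (s ^ 2 : Matrix (Fin 3) (Fin 3) F) 1 0 = 0 := by
      rw [← Units.val_pow_eq_pow_val, hs2]; rfl
    simp only [hs, suMatrix, sq, mul_fin_three, of_apply, cons_val] at h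
    refine (mul_eq_zero.1 ?_).resolve_left hc
    linear_combination h
  rw [ncard_infPt_fixed_eq_ncard_eigenvalues hs hac hF hc, Set.ncard_eq_one]
  refine ⟨1, Set.ext fun μ => ?_⟩
  rw [Set.mem_ofPred_eq, Set.mem_singleton_iff, htrace, zero_mul, CharTwo.add_eq_zero,
    ← one_pow (M := F) 2, CharTwo.sq_inj, one_pow]
  exact ⟨And.right, fun h => ⟨by rw [h, one_pow], h⟩⟩

lemma ncard_infPt_fixed_of_cube_eq_one (hc : c ≠ 0) (hq3 : q % 3 = 1) (hs3 : s ^ 3 = 1) :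
    {u : F | u ^ (q + 1) = 1 ∧ s • infPt u = infPt u}.ncard = 2 := by
  -- With `t` the trace, Cayley–Hamilton gives `s ^ 3 = (t ^ 2 - 1) • s - t` on the upper block.
  have htrace : a + a ^ q = -1 := by
    have h3 : (s ^ 3 : Matrix (Fin 3) (Fin 3) F) = 1 := by
      rw [← Units.val_pow_eq_pow_val, hs3, Units.val_one]
    simp only [hs, suMatrix, pow_three, mul_fin_three, one_fin_three] at h3
    have h10 := congrFun (congrFun h3 1) 0
    have h00 := congrFun (congrFun h3 0) 0
    simp only [of_apply, cons_val] at h10 h00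
    have hsq : (a + a ^ q) ^ 2 = 1 := by
      refine sub_eq_zero.1 ((mul_eq_zero.1 ?_).resolve_left hc)
      linear_combination h10 + c * hac
    linear_combination a * hsq - h00 - (2 * a + a ^ q) * hac
  rw [ncard_infPt_fixed_eq_ncard_eigenvalues hs hac hF hc, htrace]
  simpa only [neg_one_mul, eq_neg_iff_add_eq_zero, add_right_comm _ (1 : F)] using
    ncard_sq_add_self_add_one_eq_zero hF hq3

end SpecialUnitary

lemma pow_eq_one_of_mem_ZSet {z : GL (Fin 3) F} (hz : z ∈ ZSet q F) : z ^ (q + 1) = 1 := by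
  obtain ⟨ε, hε, hz⟩ := hz
  apply Units.ext
  rw [Units.val_pow_eq_pow_val, hz, diagonal_pow, Units.val_one, diagonal_eq_one]
  ext i
  fin_cases i <;> simp [hε]

lemma eq_one_of_mem_ZSet_of_smul_affPt_eq_self {z : GL (Fin 3) F} (hz : z ∈ ZSet q F) {p : F × F}
    (hp : p ∈ unitVectors q F) (h : z • affPt p = affPt p) : z = 1 := by
  obtain ⟨ε, -, hz⟩ := hz
  rw [diagonal_eq_block] at hz
  rw [smul_affPt hz, affPt_injective.eq_iff, Prod.ext_iff] at h
  simp only [zero_mul, add_zero, zero_add] at h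
  obtain rfl : ε = 1 := by
    by_contra hε
    have hp : p.1 ^ (q + 1) - p.2 ^ (q + 1) = 1 := hp
    simp [(mul_left_eq_self₀.1 h.1).resolve_left hε,
      (mul_left_eq_self₀.1 h.2).resolve_left hε] at hp
  exact Units.ext (hz.trans one_fin_three.symm)

section Counting

variable [Fintype F] (hF : Fintype.card F = q ^ 2)

include hF

lemma mul_smul_affPt_eq_self_iff {s z : GL (Fin 3) F} {n : ℕ} (hs : s ∈ MlSet q F)
    (hn : n.Coprime (q + 1)) (hsn : s ^ n = 1) (hz : z ∈ ZSet q F) {p : F × F}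
    (hp : p ∈ unitVectors q F) : (s * z) • affPt p = affPt p ↔ s = 1 ∧ z = 1 := by
  refine ⟨fun h => ?_, fun ⟨hs1, hz1⟩ => by rw [hs1, hz1, one_mul, one_smul]⟩
  have hzn : z ^ n • affPt p = affPt p := by
    have h := (MulAction.stabilizer _ (affPt p)).pow_mem h n
    rwa [(commute_of_mem_MlSet_of_mem_ZSet hs hz).mul_pow, hsn, one_mul] at h
  obtain rfl : z = 1 := (pow_eq_one_iff_of_coprime hn).1
    ⟨eq_one_of_mem_ZSet_of_smul_affPt_eq_self ((centralSubgroup q F).pow_mem hz n) hp hzn,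
      pow_eq_one_of_mem_ZSet hz⟩
  obtain ⟨a, c, hac, hs⟩ := exists_eq_suMatrix_of_pow_eq_one hs hn hsn
  exact ⟨eq_one_of_smul_affPt_eq_self hs hac hF hp (by rwa [mul_one] at h), rfl⟩

lemma ncard_hermitianPts_fixed_mul [DecidableEq (GL (Fin 3) F)] {s z : GL (Fin 3) F} {n : ℕ}
    (hs : s ∈ MlSet q F) (hn : n.Coprime (q + 1)) (hsn : s ^ n = 1) (hz : z ∈ ZSet q F) :
    {x | x ∈ hermitianPts q F ∧ (s * z) • x = x}.ncard =
      {u : F | u ^ (q + 1) = 1 ∧ s • infPt u = infPt u}.ncard +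
        if s = 1 ∧ z = 1 then q ^ 3 - q else 0 := by
  have haff : {p | p ∈ unitVectors q F ∧ (s * z) • affPt p = affPt p} =
      {p | p ∈ unitVectors q F ∧ (s = 1 ∧ z = 1)} :=
    Set.ext fun p => and_congr_right (mul_smul_affPt_eq_self_iff hF hs hn hsn hz)
  rw [ncard_hermitianPts_and, haff]
  simp only [mul_smul, smul_infPt_of_mem_ZSet hz]
  split_ifs with h <;> simp [h, ncard_unitVectors hF]

theorem numOrbits_hermitianPts_mul_card {S Z : Subgroup (GL (Fin 3) F)} [Fintype S]
    (hSZ : ((S ⊔ Z : Subgroup (GL (Fin 3) F)) : Set (GL (Fin 3) F)) ⊆ MlSet q F)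
    (hZ : Z ≤ centralSubgroup q F) (hS : (Nat.card S).Coprime (q + 1)) :
    numOrbits (S ⊔ Z) (hermitianPts q F) * (Nat.card S * Nat.card Z) =
      Nat.card Z * ∑ s : S, {u : F | u ^ (q + 1) = 1 ∧ s • infPt u = infPt u}.ncard +
        (q ^ 3 - q) := by
  classical
  have : Fintype Z := .ofFinite Z
  have : Fintype ↥(S ⊔ Z) := .ofFinite _
  have hSpow (s : S) : (s : GL (Fin 3) F) ^ Nat.card S = 1 := by
    rw [← S.coe_pow, pow_card_eq_one', S.coe_one]
  have hdisj : Disjoint S Z := Subgroup.disjoint_def.2 fun hs hz =>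
    (pow_eq_one_iff_of_coprime hS).1 ⟨hSpow ⟨_, hs⟩, pow_eq_one_of_mem_ZSet (hZ hz)⟩
  have hSMl (s : S) : (s : GL (Fin 3) F) ∈ MlSet q F := hSZ (le_sup_left (b := Z) s.2)
  have hcomm (s : S) (z : Z) : Commute (s : GL (Fin 3) F) z :=
    commute_of_mem_MlSet_of_mem_ZSet (hSMl s) (hZ z.2)
  have hmem (g : ↥(S ⊔ Z)) (x) (hx : x ∈ hermitianPts q F) : g • x ∈ hermitianPts q F :=
    smul_mem_hermitianPts hF (hSZ g.2) hx
  have hfix (s : S) (z : Z) :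
      {x | x ∈ hermitianPts q F ∧ prodMulEquivSup hdisj hcomm (s, z) • x = x}.ncard =
        {u : F | u ^ (q + 1) = 1 ∧ s • infPt u = infPt u}.ncard +
          if s = 1 ∧ z = 1 then q ^ 3 - q else 0 := by
    simpa only [Subgroup.smul_def, coe_prodMulEquivSup, OneMemClass.coe_eq_one]
      using ncard_hermitianPts_fixed_mul hF (hSMl s) hS (hSpow s) (hZ z.2)
  rw [numOrbits_eq_card_image_orbit, ← Nat.card_prod,
    Nat.card_congr (prodMulEquivSup hdisj hcomm).toEquiv,
    ← sum_ncard_fixed_eq_card_orbits_mul_card hmem,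
    ← (prodMulEquivSup hdisj hcomm).toEquiv.sum_comp]
  simp only [MulEquiv.toEquiv_eq_coe, MulEquiv.coe_toEquiv, Fintype.sum_prod_type_right, hfix,
    ite_and, Finset.sum_add_distrib, Finset.sum_const, Finset.sum_ite_eq', Finset.mem_univ, if_true,
    Finset.card_univ, Nat.card_eq_fintype_card, smul_eq_mul]

lemma sum_ncard_infPt_fixed_of_mulEquiv_alternatingGroup_four [CharP F 2] (hq3 : q % 3 = 1)
    {S : Subgroup (GL (Fin 3) F)} [Fintype S] (hS : (S : Set (GL (Fin 3) F)) ⊆ MlSet q F)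
    (e : S ≃* alternatingGroup (Fin 4)) :
    ∑ s : S, {u : F | u ^ (q + 1) = 1 ∧ s • infPt u = infPt u}.ncard = q + 20 := by
  have hq : q ≠ 0 := (one_lt_of_card_eq_sq hF).ne_bot
  have hcop := coprime_twelve_add_one_of_card_eq_sq hF hq3
  have hparams {n : ℕ} (hn : n ∣ 12) (s : S) (hs1 : s ≠ 1) (hsn : s ^ n = 1) :
      ∃ a c : F, ((s : GL (Fin 3) F) : Matrix (Fin 3) (Fin 3) F) = suMatrix q a c ∧
        a ^ (q + 1) - c ^ (q + 1) = 1 ∧ c ≠ 0 := by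
    have hn := hcop.coprime_dvd_left hn
    have hsn : (s : GL (Fin 3) F) ^ n = 1 := by rw [← S.coe_pow, hsn, S.coe_one]
    obtain ⟨a, c, hac, hs⟩ := exists_eq_suMatrix_of_pow_eq_one (hS s.2) hn hsn
    exact ⟨a, c, hs, hac, ne_zero_of_eq_suMatrix hs hac hq hn hsn (by simpa using hs1)⟩
  have h2 (s : S) (hs1 : s ≠ 1) (hs2 : s ^ 2 = 1) :
      {u : F | u ^ (q + 1) = 1 ∧ s • infPt u = infPt u}.ncard = 1 := by
    obtain ⟨a, c, hs, hac, hc⟩ := hparams (by norm_num) s hs1 hs2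
    exact ncard_infPt_fixed_of_sq_eq_one hs hac hF hc (congrArg Subtype.val hs2)
  have h3 (s : S) (hs1 : s ≠ 1) (hs3 : s ^ 3 = 1) :
      {u : F | u ^ (q + 1) = 1 ∧ s • infPt u = infPt u}.ncard = 2 := by
    obtain ⟨a, c, hs, hac, hc⟩ := hparams (by norm_num) s hs1 hs3
    exact ncard_infPt_fixed_of_cube_eq_one hs hac hF hc hq3 (congrArg Subtype.val hs3)
  rw [sum_of_mulEquiv_alternatingGroup_four e h2 h3]
  simp only [one_smul, and_true, ncard_pow_eq hF one_ne_zero (one_pow q), smul_eq_mul]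

theorem numOrbits_hermitianPts_mul_of_mulEquiv_alternatingGroup_four [CharP F 2] (hq3 : q % 3 = 1)
    {S Z : Subgroup (GL (Fin 3) F)} (e : S ≃* alternatingGroup (Fin 4))
    (hSZ : ((S ⊔ Z : Subgroup (GL (Fin 3) F)) : Set (GL (Fin 3) F)) ⊆ MlSet q F)
    (hZ : Z ≤ centralSubgroup q F) :
    numOrbits (S ⊔ Z) (hermitianPts q F) * (12 * Nat.card Z) =
      Nat.card Z * (q + 20) + (q ^ 3 - q) := by
  have : Fintype S := .ofFinite S
  have hcard : Nat.card S = 12 := by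
    rw [Nat.card_congr e.toEquiv, Nat.card_eq_fintype_card]
    decide
  have hS : (S : Set (GL (Fin 3) F)) ⊆ MlSet q F := (SetLike.coe_subset_coe.2 le_sup_left).trans hSZ
  rw [← hcard, numOrbits_hermitianPts_mul_card hF hSZ hZ
      (hcard ▸ coprime_twelve_add_one_of_card_eq_sq hF hq3),
    sum_ncard_infPt_fixed_of_mulEquiv_alternatingGroup_four hF hq3 hS e]

end Counting

end HermitianCurve

theorem stmt10 (h q w : ℕ) (hh : 1 ≤ h) (hq : q = 2 ^ h) (heven : Even h)
    (F : Type*) [Field F] [Fintype F] (hF : Fintype.card F = q ^ 2)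
    (hw : w ∣ q + 1)
    (L : Subgroup (GL (Fin 3) F)) (hLMl : (L : Set (GL (Fin 3) F)) ⊆ MlSet q F)
    (hZcard : Nat.card ((L : Set (GL (Fin 3) F)) ∩ ZSet q F : Set (GL (Fin 3) F)) = w)
    (S : Subgroup (GL (Fin 3) F))
    (hSiso : Nonempty (↥S ≃* alternatingGroup (Fin 4)))
    (hgen : L = Subgroup.closure
      ((S : Set (GL (Fin 3) F)) ∪ ((L : Set (GL (Fin 3) F)) ∩ ZSet q F)))
    (htriv : (S : Set (GL (Fin 3) F)) ∩ ((L : Set (GL (Fin 3) F)) ∩ ZSet q F) ⊆ {1}) :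
    (numOrbits L (hermitianPts q F) : ℚ)
      = ((q : ℚ) + 20) / 12
        + ((q : ℚ) / 4) * (((q : ℚ) - 1) / 3) * (((q : ℚ) + 1) / (w : ℚ)) := by
  have hchar : CharP F 2 := charP_of_card_eq_prime_pow (f := h * 2) (by rw [hF, hq, pow_mul])
  have hq3 : q % 3 = 1 := by
    obtain ⟨k, rfl⟩ := heven.two_dvd
    simp [hq, pow_mul, Nat.pow_mod]
  obtain ⟨e⟩ := hSiso
  have hL : L = S ⊔ L ⊓ centralSubgroup q F :=
    hgen.trans (Subgroup.sup_eq_closure S (L ⊓ centralSubgroup q F)).symm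
  have hw0 : (w : ℚ) ≠ 0 := by
    rw [← hZcard]
    exact_mod_cast (Nat.card_pos (α := ↥(L ⊓ centralSubgroup q F))).ne'
  have hcount := numOrbits_hermitianPts_mul_of_mulEquiv_alternatingGroup_four hF hq3 e
    (hL ▸ hLMl) inf_le_right
  rw [← hL, show Nat.card ↥(L ⊓ centralSubgroup q F) = w from hZcard] at hcount
  have hcountℚ := congrArg (Nat.cast (R := ℚ)) hcount
  push_cast [Nat.cast_sub (Nat.le_self_pow three_ne_zero q)] at hcountℚ
  field_simp
  linear_combination 12 * hcountℚ
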